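/- Let (g_m)_{m≥1} be probability densities on [0,1], let (η_m)_{m≥1} be fixed signs with η_m ∈ {−1, +1}, and let h_M denote the density of η_1 Y_1 + ··· + η_M Y_M modulo 1, where the Y_m are independent random variables with densities g_m (if Y has density g(y) then −Y modulo 1 has density g(1−y)). Then h_M converges in L¹([0,1]) to the constant function 1 as M → ∞ if and only if for every integer n ≠ 0 one has lim_{M→∞} ĝ_1(n)···ĝ_M(n) = 0. -/

import Mathlib

open MeasureTheory Filter

noncomputable section

/-- A probability density on `[0,1]`: nonnegative, integrable, total integral one. -/
def IsProbDensity (g : ℝ → ℝ) : Prop :=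
  (∀ x, 0 ≤ g x) ∧ IntegrableOn g (Set.Icc 0 1) ∧ (∫ x in (0:ℝ)..1, g x) = 1

/-- Circular convolution on `[0,1]` (the argument is taken modulo 1). -/
def circConv (f g : ℝ → ℝ) : ℝ → ℝ :=
  fun x => ∫ y in (0:ℝ)..1, f y * g (Int.fract (x - y))

/-- The `n`-th Fourier coefficient of `g ∈ L¹([0,1])`. -/
def fourierCoeff01 (g : ℝ → ℝ) (n : ℤ) : ℂ :=
  ∫ x in (0:ℝ)..1, (g x : ℂ) * Complex.exp (-(2 * Real.pi * Complex.I) * n * x)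

/-- Convolution of complex functions on the circle of length one. -/
def circleConv (f g : UnitAddCircle → ℂ) : UnitAddCircle → ℂ :=
  convolution f g (ContinuousLinearMap.mul ℂ ℂ) volume

/-- The `n`-th Fourier coefficient of a function on the circle of length one. -/
def circleCoeff (f : UnitAddCircle → ℂ) (n : ℤ) : ℂ :=
  ∫ t, f t * fourier (-n) t

theorem circleConv_apply (f g : UnitAddCircle → ℂ) (x : UnitAddCircle) :
    circleConv f g x = ∫ t, f t * g (x - t) := rfl

theorem integrable_circleConv {f g : UnitAddCircle → ℂ} (hf : Integrable f) (hg : Integrable g) :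
    Integrable (circleConv f g) :=
  hf.integrable_convolution _ hg

theorem integral_norm_circleConv_le {f g : UnitAddCircle → ℂ} (hf : Integrable f)
    (hg : Integrable g) :
    ∫ x, ‖circleConv f g x‖ ≤ (∫ x, ‖f x‖) * ∫ x, ‖g x‖ := by
  have h := integral_convolution (ContinuousLinearMap.mul ℝ ℝ) hf.norm hg.norm
  rw [ContinuousLinearMap.mul_apply'] at h
  rw [← h]
  refine integral_mono (integrable_circleConv hf hg).norm
    (hf.norm.integrable_convolution _ hg.norm) fun x => ?_
  refine (norm_integral_le_integral_norm _).trans_eq ?_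
  simp [convolution_def]

theorem norm_fourier_apply (n : ℤ) (x : UnitAddCircle) : ‖(fourier n x : ℂ)‖ = 1 := by
  rw [fourier_apply]
  exact Circle.norm_coe _

theorem volume_real_univ_unitAddCircle : (volume : Measure UnitAddCircle).real Set.univ = 1 := by
  rw [measureReal_def, UnitAddCircle.measure_univ, ENNReal.toReal_one]

theorem integrable_mul_fourier {f : UnitAddCircle → ℂ} (hf : Integrable f) (n : ℤ) :
    Integrable fun x => f x * fourier n x :=
  hf.mul_bdd (fourier n).continuous.aestronglyMeasurable 
    (.of_forall fun x => (norm_fourier_apply n x).le)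

theorem fourier_add_arg (n : ℤ) (x y : UnitAddCircle) :
    fourier n (x + y) = fourier n x * fourier n y := by
  simp [fourier_apply, smul_add, AddCircle.toCircle_add]

theorem circleCoeff_circleConv {f g : UnitAddCircle → ℂ} (hf : Integrable f) (hg : Integrable g)
    (n : ℤ) : circleCoeff (circleConv f g) n = circleCoeff f n * circleCoeff g n := by
  have h := integral_convolution (ContinuousLinearMap.mul ℂ ℂ) (integrable_mul_fourier hf (-n))
    (integrable_mul_fourier hg (-n))
  rw [ContinuousLinearMap.mul_apply'] at h
  unfold circleCoeff
  rw [← h]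
  refine integral_congr_ae (.of_forall fun x => ?_)
  simp only [circleConv_apply, convolution_def, ContinuousLinearMap.mul_apply']
  rw [← integral_mul_const]
  refine integral_congr_ae (.of_forall fun t => ?_)
  have := fourier_add_arg (-n) t (x - t)
  rw [add_sub_cancel] at this
  simp only [this]
  ring

theorem circleConv_fourier (n : ℤ) (g : UnitAddCircle → ℂ) (x : UnitAddCircle) :
    circleConv (fourier n) g x = circleCoeff g n * fourier n x := by
  rw [circleConv_apply, circleCoeff, ← integral_sub_left_eq_self _ _ x, ← integral_mul_const]
  refine integral_congr_ae (.of_forall fun t => ?_)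
  have h1 := fourier_add_arg n t (x - t)
  have h2 : fourier (-n) t * fourier n t = (1 : ℂ) := by
    rw [← fourier_add]; simp
  rw [add_sub_cancel] at h1
  simp only [sub_sub_cancel, h1]
  linear_combination (-fourier n (x - t) * g t) * h2

theorem circleCoeff_fourier (m n : ℤ) :
    circleCoeff (fourier m) n = if m = n then 1 else 0 := by
  have h := congrFun (fourierCoeff_fourier (T := 1) m) n
  have hv : (volume : Measure UnitAddCircle) = AddCircle.haarAddCircle := by
    simpa using AddCircle.volume_eq_smul_haarAddCircle (T := 1)
  rw [fourierCoeff] at h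
  rw [circleCoeff, hv]
  simp only [smul_eq_mul, mul_comm (fourier (-n) _ : ℂ)] at h
  rw [h]
  simp [Pi.single_apply, eq_comm]

/-- The trigonometric polynomial with coefficients `a n` weighted by those of the Fejér kernel of
order `N`. -/
def fejerSum (N : ℕ) (a : ℤ → ℂ) (x : UnitAddCircle) : ℂ :=
  ∑ p ∈ Finset.range (N + 1) ×ˢ Finset.range (N + 1),
    ((N + 1 : ℂ)⁻¹ * a ((p.1 : ℤ) - p.2)) * fourier ((p.1 : ℤ) - p.2) x

theorem continuous_fejerSum (N : ℕ) (a : ℤ → ℂ) : Continuous (fejerSum N a) := by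
  unfold fejerSum
  fun_prop

theorem integrable_of_continuous {f : UnitAddCircle → ℂ} (hf : Continuous f) : Integrable f :=
  hf.integrable_of_hasCompactSupport (HasCompactSupport.of_compactSpace f)

theorem circleConv_fejerSum (N : ℕ) (a : ℤ → ℂ) {g : UnitAddCircle → ℂ} (hg : Integrable g) :
    circleConv (fejerSum N a) g = fejerSum N fun n => a n * circleCoeff g n := by
  ext x
  rw [circleConv_apply]
  simp only [fejerSum, Finset.sum_mul]
  rw [integral_finsetSum]
  · refine Finset.sum_congr rfl fun p _ => ?_
    rw [mul_assoc, mul_assoc, ← circleConv_fourier, circleConv_apply,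
      ← integral_const_mul, ← integral_const_mul]
    simp only [mul_assoc]
  · intro p _
    have := ((integrable_mul_fourier (hg.comp_sub_left x) ((p.1 : ℤ) - p.2)).const_mul
      ((N + 1 : ℂ)⁻¹ * a ((p.1 : ℤ) - p.2)))
    refine this.congr (.of_forall fun t => ?_)
    simp only
    ring

theorem fejerSum_one_eq (N : ℕ) (x : UnitAddCircle) :
    fejerSum N 1 x =
      (((N + 1 : ℝ)⁻¹ * ‖∑ i ∈ Finset.range (N + 1), (fourier (i : ℤ) x : ℂ)‖ ^ 2 : ℝ) : ℂ) := by
  push_cast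
  rw [← Complex.mul_conj', map_sum, Finset.sum_mul_sum, ← Finset.sum_product', Finset.mul_sum]
  refine Finset.sum_congr rfl fun p _ => ?_
  rw [← fourier_neg, ← fourier_add]
  simp [sub_eq_add_neg]

theorem integral_norm_fejerSum_one (N : ℕ) : ∫ x, ‖fejerSum N 1 x‖ = 1 := by
  have h : ∀ x, ((‖fejerSum N 1 x‖ : ℝ) : ℂ) = fejerSum N 1 x := fun x => by
    rw [fejerSum_one_eq, Complex.norm_of_nonneg (by positivity)]
  rw [← Complex.ofReal_inj, ← integral_complex_ofReal]
  simp only [h]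
  simp only [fejerSum]
  have hc : ∀ n : ℤ, ∫ x : UnitAddCircle, fourier n x = if n = 0 then (1 : ℂ) else 0 := fun n => by
    simpa [circleCoeff] using circleCoeff_fourier n 0
  rw [integral_finsetSum _ fun p _ => integrable_of_continuous (by fun_prop)]
  simp only [integral_const_mul, hc, sub_eq_zero, Nat.cast_inj, Finset.sum_product]
  have : (N + 1 : ℂ) ≠ 0 := by exact_mod_cast N.succ_ne_zero
  simp +contextual [Finset.sum_ite_eq, this]

/-- The `N`-th Fejér mean of `f`. -/
def fejer (N : ℕ) (f : UnitAddCircle → ℂ) : UnitAddCircle → ℂ := fejerSum N (circleCoeff f)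

theorem fejer_eq_circleConv (N : ℕ) {f : UnitAddCircle → ℂ} (hf : Integrable f) :
    fejer N f = circleConv (fejerSum N 1) f := by
  simp [circleConv_fejerSum N _ hf, fejer]

theorem integrable_fejer (N : ℕ) (f : UnitAddCircle → ℂ) : Integrable (fejer N f) :=
  integrable_of_continuous (continuous_fejerSum N _)

theorem integral_norm_fejer_le (N : ℕ) {f : UnitAddCircle → ℂ} (hf : Integrable f) :
    ∫ x, ‖fejer N f x‖ ≤ ∫ x, ‖f x‖ := by
  simpa [integral_norm_fejerSum_one, fejer_eq_circleConv N hf] using integral_norm_circleConv_le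
    (integrable_of_continuous (continuous_fejerSum N 1)) hf

theorem fejer_circleConv (N : ℕ) {f g : UnitAddCircle → ℂ} (hf : Integrable f)
    (hg : Integrable g) : fejer N (circleConv f g) = circleConv (fejer N f) g := by
  rw [fejer, fejer, circleConv_fejerSum N _ hg]
  congr 1
  ext n
  exact circleCoeff_circleConv hf hg n

theorem circleCoeff_add {f g : UnitAddCircle → ℂ} (hf : Integrable f) (hg : Integrable g) (n : ℤ) :
    circleCoeff (f + g) n = circleCoeff f n + circleCoeff g n := by
  simp only [circleCoeff, Pi.add_apply, add_mul]
  exact integral_add (integrable_mul_fourier hf _) (integrable_mul_fourier hg _)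

theorem circleCoeff_smul (c : ℂ) (f : UnitAddCircle → ℂ) (n : ℤ) :
    circleCoeff (c • f) n = c * circleCoeff f n := by
  simp only [circleCoeff, Pi.smul_apply, smul_eq_mul, mul_assoc]
  exact integral_const_mul _ _

theorem fejer_add (N : ℕ) {f g : UnitAddCircle → ℂ} (hf : Integrable f) (hg : Integrable g) :
    fejer N (f + g) = fejer N f + fejer N g := by
  ext x
  simp only [fejer, fejerSum, circleCoeff_add hf hg, Pi.add_apply, ← Finset.sum_add_distrib]
  exact Finset.sum_congr rfl fun p _ => by ring

theorem fejer_smul (N : ℕ) (c : ℂ) (f : UnitAddCircle → ℂ) :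
    fejer N (c • f) = c • fejer N f := by
  ext x
  simp only [fejer, fejerSum, circleCoeff_smul, Pi.smul_apply, smul_eq_mul, Finset.mul_sum]
  exact Finset.sum_congr rfl fun p _ => by ring

theorem circleConv_sub_left {f f' g : UnitAddCircle → ℂ} (hf : Integrable f)
    (hf' : Integrable f') (hg : Integrable g) :
    circleConv (f - f') g =ᵐ[volume] circleConv f g - circleConv f' g := by
  filter_upwards [hf.ae_convolution_exists (ContinuousLinearMap.mul ℂ ℂ) hg,
    hf'.ae_convolution_exists (ContinuousLinearMap.mul ℂ ℂ) hg] with x h1 h2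
  simp only [circleConv_apply, Pi.sub_apply, sub_mul]
  exact integral_sub h1 h2


theorem card_filter_eq_sub_le (N : ℕ) (m : ℤ) :
    ((Finset.range (N + 1) ×ˢ Finset.range (N + 1)).filter
      fun p => m = (p.1 : ℤ) - p.2).card ≤ N + 1 := by
  refine (Finset.card_le_card_of_injOn Prod.snd (t := Finset.range (N + 1)) ?_ ?_).trans
    (Finset.card_range _).le
  · intro p hp
    simp only [Finset.coe_filter, Finset.mem_product, Set.mem_ofPred_eq] at hp
    exact hp.1.2
  · rintro ⟨a, b⟩ hp ⟨c, d⟩ hq h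
    simp only [Finset.coe_filter, Finset.mem_product, Set.mem_ofPred_eq] at hp hq h
    ext <;> simp only <;> omega

theorem le_card_filter_eq_sub (N : ℕ) (m : ℤ) :
    N + 1 ≤ ((Finset.range (N + 1) ×ˢ Finset.range (N + 1)).filter
      fun p => m = (p.1 : ℤ) - p.2).card + m.natAbs := by
  have := Finset.card_le_card_of_injOn (s := Finset.range (N + 1 - m.natAbs))
    (t := (Finset.range (N + 1) ×ˢ Finset.range (N + 1)).filter fun p => m = (p.1 : ℤ) - p.2)
    (fun j => (j + m.toNat, j + (-m).toNat)) ?_ ?_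
  · rw [Finset.card_range] at this
    omega
  · intro j hj
    simp only [Finset.coe_range, Set.mem_Iio, Finset.coe_filter, Finset.mem_product,
      Finset.mem_range, Set.mem_ofPred_eq] at hj ⊢
    omega
  · intro a _ b _ h
    simp only [Prod.mk.injEq] at h
    omega

theorem fejer_fourier (N : ℕ) (m : ℤ) (x : UnitAddCircle) :
    fejer N (fourier m) x = ((((Finset.range (N + 1) ×ˢ Finset.range (N + 1)).filter
      fun p => m = (p.1 : ℤ) - p.2).card / (N + 1) : ℝ) : ℂ) * fourier m x := by
  have : ∀ p : ℕ × ℕ, (N + 1 : ℂ)⁻¹ * circleCoeff (fourier m) ((p.1 : ℤ) - p.2) *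
      fourier ((p.1 : ℤ) - p.2) x =
        if m = (p.1 : ℤ) - p.2 then (N + 1 : ℂ)⁻¹ * fourier m x else 0 := fun p => by
    rw [circleCoeff_fourier]
    split_ifs with h
    · rw [h, mul_one]
    · simp
  simp only [fejer, fejerSum, this]
  rw [← Finset.sum_filter, Finset.sum_const]
  push_cast
  rw [nsmul_eq_mul]
  ring

theorem tendsto_fejer_fourier (m : ℤ) :
    Tendsto (fun N => ∫ x, ‖(fourier m : UnitAddCircle → ℂ) x - fejer N (fourier m) x‖) atTop
      (nhds 0) := by
  have h := (tendsto_one_div_add_atTop_nhds_zero_nat (𝕜 := ℝ)).const_mul (m.natAbs : ℝ)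
  rw [mul_zero] at h
  refine squeeze_zero (fun N => by positivity) (fun N => ?_) h
  have hx : ∀ x : UnitAddCircle, ‖fourier m x - fejer N (fourier m) x‖ ≤
      (m.natAbs : ℝ) * (1 / ((N : ℝ) + 1)) := fun x => by
    rw [fejer_fourier, ← one_sub_mul, norm_mul, ← Complex.ofReal_one, ← Complex.ofReal_sub,
      Complex.norm_real, Real.norm_eq_abs]
    have h1 := card_filter_eq_sub_le N m
    have h2 := le_card_filter_eq_sub N m
    set c := ((Finset.range (N + 1) ×ˢ Finset.range (N + 1)).filter
      fun p => m = (p.1 : ℤ) - p.2).card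
    have h1' : (c : ℝ) ≤ N + 1 := by exact_mod_cast h1
    have h2' : (N + 1 : ℝ) ≤ c + m.natAbs := by exact_mod_cast h2
    have hN : (0 : ℝ) < N + 1 := by positivity
    rw [norm_fourier_apply, mul_one, abs_of_nonneg (sub_nonneg.2 ((div_le_one hN).2 h1')), one_sub_div hN.ne',
      mul_one_div]
    gcongr
    linarith
  refine (integral_mono_of_nonneg (.of_forall fun x => norm_nonneg _) (integrable_const _)
    (.of_forall hx)).trans_eq ?_
  simp [volume_real_univ_unitAddCircle]

theorem tendsto_fejer_of_mem_span {f : C(UnitAddCircle, ℂ)}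
    (hf : f ∈ Submodule.span ℂ (Set.range (fourier : ℤ → C(UnitAddCircle, ℂ)))) :
    Tendsto (fun N => ∫ x, ‖f x - fejer N f x‖) atTop (nhds 0) := by
  induction hf using Submodule.span_induction with
  | mem f hf =>
    obtain ⟨m, rfl⟩ := hf
    exact tendsto_fejer_fourier m
  | zero =>
    have : ∀ N, fejer N (0 : UnitAddCircle → ℂ) = 0 := fun N => by
      simpa using fejer_smul N 0 0
    simp [this]
  | add f g _ _ hf hg =>
    have hf' := integrable_of_continuous f.continuous
    have hg' := integrable_of_continuous g.continuous
    refine squeeze_zero (fun N => by positivity) (fun N => ?_) (by simpa using hf.add hg)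
    have hi := (hf'.sub (integrable_fejer N f)).norm
    have hj := (hg'.sub (integrable_fejer N g)).norm
    simp only [Pi.sub_apply] at hi hj
    rw [← integral_add hi hj]
    refine integral_mono_of_nonneg (.of_forall fun x => norm_nonneg _) (hi.add hj)
      (.of_forall fun x => ?_)
    simp only [ContinuousMap.coe_add, fejer_add N hf' hg', Pi.add_apply, add_sub_add_comm]
    exact norm_add_le _ _
  | smul c f _ hf =>
    simp only [ContinuousMap.coe_smul, fejer_smul, Pi.smul_apply, ← smul_sub, norm_smul,
      integral_const_mul]
    simpa using hf.const_mul ‖c‖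

theorem exists_mem_span_fourier_integral_norm_sub_le {f : UnitAddCircle → ℂ} (hf : Integrable f)
    {ε : ℝ} (hε : 0 < ε) :
    ∃ g ∈ Submodule.span ℂ (Set.range (fourier : ℤ → C(UnitAddCircle, ℂ))),
      ∫ x, ‖f x - g x‖ ≤ ε := by
  obtain ⟨φ, -, hφ, hc, hi⟩ := hf.exists_hasCompactSupport_integral_sub_le (half_pos hε)
  have hmem : (⟨φ, hc⟩ : C(UnitAddCircle, ℂ)) ∈
      (Submodule.span ℂ (Set.range (fourier : ℤ → C(UnitAddCircle, ℂ)))).topologicalClosure := by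
    rw [span_fourier_closure_eq_top]
    trivial
  obtain ⟨g, hg, hd⟩ := Metric.mem_closure_iff.1 hmem (ε / 2) (half_pos hε)
  refine ⟨g, hg, ?_⟩
  have h : ∀ x, ‖f x - g x‖ ≤ ‖f x - φ x‖ + ε / 2 := fun x => by
    have h1 := (ContinuousMap.dist_apply_le_dist x).trans hd.le
    rw [dist_eq_norm] at h1
    exact (norm_sub_le_norm_sub_add_norm_sub _ (φ x) _).trans (by gcongr; exact h1)
  have hi' := (hf.sub hi).norm
  simp only [Pi.sub_apply] at hi'
  refine (integral_mono_of_nonneg (.of_forall fun x => norm_nonneg _)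
    (hi'.add (integrable_const _)) (.of_forall h)).trans ?_
  rw [Pi.add_def, integral_add hi' (integrable_const _)]
  rw [integral_const, volume_real_univ_unitAddCircle, one_smul]
  linarith

theorem integral_norm_sub_le {f g k : UnitAddCircle → ℂ} (hf : Integrable f) (hg : Integrable g)
    (hk : Integrable k) :
    ∫ x, ‖f x - k x‖ ≤ (∫ x, ‖f x - g x‖) + ∫ x, ‖g x - k x‖ := by
  have hi := (hf.sub hg).norm
  have hj := (hg.sub hk).norm
  simp only [Pi.sub_apply] at hi hj
  rw [← integral_add hi hj]
  exact integral_mono_of_nonneg (.of_forall fun x => norm_nonneg _) (hi.add hj)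
      (.of_forall fun x => norm_sub_le_norm_sub_add_norm_sub _ _ _)

theorem fejer_sub (N : ℕ) {f g : UnitAddCircle → ℂ} (hf : Integrable f) (hg : Integrable g) :
    fejer N (f - g) = fejer N f - fejer N g := by
  have h := fejer_add N (hf.sub hg) hg
  rw [sub_add_cancel] at h
  rw [h, add_sub_cancel_right]

theorem tendsto_fejer {f : UnitAddCircle → ℂ} (hf : Integrable f) :
    Tendsto (fun N => ∫ x, ‖f x - fejer N f x‖) atTop (nhds 0) := by
  rw [Metric.tendsto_nhds]
  intro ε hε
  obtain ⟨g, hg, hd⟩ := exists_mem_span_fourier_integral_norm_sub_le hf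
    (by positivity : 0 < ε / 3)
  have hi := integrable_of_continuous g.continuous
  filter_upwards [(tendsto_fejer_of_mem_span hg).eventually_lt_const (by positivity : 0 < ε / 3)]
    with N hN
  rw [Real.dist_0_eq_abs, abs_of_nonneg (by positivity)]
  have h1 := integral_norm_sub_le hf hi (integrable_fejer N f)
  have h2 := integral_norm_sub_le hi (integrable_fejer N g) (integrable_fejer N f)
  have h3 := integral_norm_fejer_le N (hi.sub hf)
  simp only [fejer_sub N hi hf, Pi.sub_apply, norm_sub_rev (g _) (f _)] at h3
  linarith

theorem integral_norm_fejer_sub_le (N : ℕ) (f g : UnitAddCircle → ℂ) :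
    ∫ x, ‖fejer N f x - fejer N g x‖ ≤ ∑ p ∈ Finset.range (N + 1) ×ˢ Finset.range (N + 1),
      ‖circleCoeff f ((p.1 : ℤ) - p.2) - circleCoeff g ((p.1 : ℤ) - p.2)‖ := by
  refine (integral_mono_of_nonneg (.of_forall fun x => norm_nonneg _) (integrable_const
    (∑ p ∈ Finset.range (N + 1) ×ˢ Finset.range (N + 1),
      ‖circleCoeff f ((p.1 : ℤ) - p.2) - circleCoeff g ((p.1 : ℤ) - p.2)‖))
    (.of_forall fun x => ?_)).trans_eq
      (by simp [volume_real_univ_unitAddCircle])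
  simp only [fejer, fejerSum, ← Finset.sum_sub_distrib]
  refine (norm_sum_le _ _).trans (Finset.sum_le_sum fun p _ => ?_)
  rw [← sub_mul, ← mul_sub, norm_mul, norm_mul]
  have hN : ‖(N + 1 : ℂ)⁻¹‖ ≤ 1 := by
    rw [norm_inv]
    refine inv_le_one_of_one_le₀ ?_
    have : ((N + 1 : ℕ) : ℂ) = N + 1 := by push_cast; rfl
    rw [← this, Complex.norm_natCast]
    simp
  rw [norm_fourier_apply, mul_one]
  exact mul_le_of_le_one_left (norm_nonneg _) hN

/-- Iterated convolutions with functions of `L¹` norm at most one converge in `L¹` as soon as their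
Fourier coefficients converge to those of an integrable function. -/
theorem tendsto_iterated_circleConv {H G : ℕ → UnitAddCircle → ℂ} {K : UnitAddCircle → ℂ}
    (hH : Integrable (H 1)) (hG : ∀ m, 1 ≤ m → Integrable (G m))
    (hG1 : ∀ m, 1 ≤ m → ∫ x, ‖G m x‖ ≤ 1)
    (hrec : ∀ M, 1 ≤ M → H (M + 1) = circleConv (H M) (G (M + 1))) (hK : Integrable K)
    (hc : ∀ n, Tendsto (fun M => circleCoeff (H M) n) atTop (nhds (circleCoeff K n))) :
    Tendsto (fun M => ∫ x, ‖H M x - K x‖) atTop (nhds 0) := by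
  have hi : ∀ M, 1 ≤ M → Integrable (H M) := fun M hM => by
    induction M, hM using Nat.le_induction with
    | base => exact hH
    | succ M hM ih => exact hrec M hM ▸ integrable_circleConv ih (hG _ (by omega))
  have hmono : ∀ N M, 1 ≤ M →
      ∫ x, ‖H M x - fejer N (H M) x‖ ≤ ∫ x, ‖H 1 x - fejer N (H 1) x‖ := fun N M hM => by
    induction M, hM using Nat.le_induction with
    | base => exact le_rfl
    | succ M hM ih =>
      refine le_trans ?_ ih
      have hg := hG (M + 1) (by omega)
      have hF := integrable_fejer N (H M)
      rw [hrec M hM, fejer_circleConv N (hi M hM) hg]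
      have h1 := integral_norm_circleConv_le ((hi M hM).sub hF) hg
      have h2 : ∫ x, ‖circleConv (H M - fejer N (H M)) (G (M + 1)) x‖ =
          ∫ x, ‖circleConv (H M) (G (M + 1)) x - circleConv (fejer N (H M)) (G (M + 1)) x‖ := by
        refine integral_congr_ae ?_
        filter_upwards [circleConv_sub_left (hi M hM) hF hg] with x hx
        rw [hx, Pi.sub_apply]
      rw [← h2]
      exact h1.trans (mul_le_of_le_one_right (by positivity) (hG1 _ (by omega)))
  rw [Metric.tendsto_nhds]
  intro ε hε
  obtain ⟨N, hN1, hN2⟩ := (((tendsto_fejer hH).eventually_lt_const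
    (by positivity : 0 < ε / 3)).and ((tendsto_fejer hK).eventually_lt_const
    (by positivity : 0 < ε / 3))).exists
  have hs : Tendsto (fun M => ∑ p ∈ Finset.range (N + 1) ×ˢ Finset.range (N + 1),
      ‖circleCoeff (H M) ((p.1 : ℤ) - p.2) - circleCoeff K ((p.1 : ℤ) - p.2)‖) atTop
      (nhds 0) := by
    rw [← Finset.sum_const_zero]
    exact tendsto_finsetSum _ fun p _ => tendsto_iff_norm_sub_tendsto_zero.1 (hc _)
  filter_upwards [hs.eventually_lt_const (by positivity : 0 < ε / 3), eventually_ge_atTop 1]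
    with M hM hM1
  rw [Real.dist_0_eq_abs, abs_of_nonneg (by positivity)]
  have h1 := integral_norm_sub_le (hi M hM1) (integrable_fejer N (H M)) hK
  have h2 := integral_norm_sub_le (integrable_fejer N (H M)) (integrable_fejer N K) hK
  have h3 := integral_norm_fejer_sub_le N (H M) K
  have h4 := hmono N M hM1
  simp only [norm_sub_rev (K _)] at hN2
  linarith

/-- The complex function on the circle induced by the restriction of `f` to `[0,1)`. -/
def circleLift (f : ℝ → ℝ) : UnitAddCircle → ℂ := fun x => (f (AddCircle.equivIco 1 0 x) : ℂ)

theorem circleLift_coe (f : ℝ → ℝ) (x : ℝ) :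
    circleLift f (x : UnitAddCircle) = (f (Int.fract x) : ℂ) := by
  have := AddCircle.coe_equivIco_mk_apply (1 : ℝ) x
  rw [div_one, mul_one] at this
  rw [← this]
  rfl

theorem circleLift_coe_of_mem (f : ℝ → ℝ) {x : ℝ} (hx : x ∈ Set.Ioo (0 : ℝ) 1) :
    circleLift f (x : UnitAddCircle) = (f x : ℂ) := by
  rw [circleLift_coe, Int.fract_eq_self.2 ⟨hx.1.le, hx.2⟩]

theorem integral_circle_eq {E : Type*} [NormedAddCommGroup E] [NormedSpace ℝ E]
    (φ : UnitAddCircle → E) : ∫ t, φ t = ∫ x in (0 : ℝ)..1, φ (x : UnitAddCircle) := by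
  simpa using (UnitAddCircle.intervalIntegral_preimage 0 φ).symm

theorem circleCoeff_circleLift (f : ℝ → ℝ) (n : ℤ) :
    circleCoeff (circleLift f) n = fourierCoeff01 f n := by
  rw [circleCoeff, integral_circle_eq, fourierCoeff01]
  refine intervalIntegral.integral_congr_Ioo_of_le zero_le_one fun x hx => ?_
  simp only [circleLift_coe_of_mem f hx, fourier_coe_apply]
  congr 2
  push_cast
  ring

theorem circleLift_circConv (f g : ℝ → ℝ) :
    circleLift (circConv f g) = circleConv (circleLift f) (circleLift g) := by
  ext x
  rw [circleConv_apply, integral_circle_eq, circleLift, circConv,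
    ← intervalIntegral.integral_ofReal]
  refine intervalIntegral.integral_congr_Ioo_of_le zero_le_one fun y hy => ?_
  have hx : x - (y : UnitAddCircle) =
      (((AddCircle.equivIco 1 0 x : ℝ) - y : ℝ) : UnitAddCircle) := by
    rw [AddCircle.coe_sub, AddCircle.coe_equivIco]
  simp only [circleLift_coe_of_mem f hy, hx]
  rw [circleLift_coe]
  push_cast
  rfl

theorem integrable_circleLift {f : ℝ → ℝ} (hf : IntegrableOn f (Set.Icc 0 1)) :
    Integrable (circleLift f) := by
  have h : MemLp (fun x => (f x : ℂ)) 1 (volume.restrict (Set.Ioc (0 : ℝ) (0 + 1))) := by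
    rw [memLp_one_iff_integrable, zero_add]
    exact (hf.mono_set Set.Ioc_subset_Icc_self).ofReal
  refine (memLp_one_iff_integrable.1 h.memLp_liftIoc).congr ?_
  have h0 : ∀ᵐ x : UnitAddCircle, (x ≠ ((0 : ℝ) : UnitAddCircle)) := by
    simp [ae_iff, ← Metric.closedBall_zero, AddCircle.volume_closedBall]
  filter_upwards [h0] with x hx
  rw [AddCircle.liftIoc_eq_liftIco_of_ne hx]
  rfl

theorem integral_norm_circleLift_sub_one (f : ℝ → ℝ) :
    ∫ x, ‖circleLift f x - 1‖ = ∫ x in (0 : ℝ)..1, |f x - 1| := by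
  rw [integral_circle_eq]
  refine intervalIntegral.integral_congr_Ioo_of_le zero_le_one fun x hx => ?_
  simp only [circleLift_coe_of_mem f hx]
  rw [← Complex.ofReal_one, ← Complex.ofReal_sub, Complex.norm_real, Real.norm_eq_abs]

theorem IsProbDensity.integral_norm_circleLift {f : ℝ → ℝ} (hf : IsProbDensity f) :
    ∫ x, ‖circleLift f x‖ = 1 := by
  rw [integral_circle_eq]
  refine Eq.trans ?_ hf.2.2
  refine intervalIntegral.integral_congr_Ioo_of_le zero_le_one fun x hx => ?_
  simp only [circleLift_coe_of_mem f hx, Complex.norm_of_nonneg (hf.1 x)]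

theorem IsProbDensity.fourierCoeff01_zero {f : ℝ → ℝ} (hf : IsProbDensity f) :
    fourierCoeff01 f 0 = 1 := by
  simp [fourierCoeff01, intervalIntegral.integral_ofReal, hf.2.2]

theorem IsProbDensity.comp_one_sub {f : ℝ → ℝ} (hf : IsProbDensity f) :
    IsProbDensity fun y => f (1 - y) := by
  refine ⟨fun x => hf.1 _, ?_, ?_⟩
  · have h : IntervalIntegrable f volume 0 1 :=
      (intervalIntegrable_iff_integrableOn_Icc_of_le zero_le_one).2 hf.2.1
    rw [← intervalIntegrable_iff_integrableOn_Icc_of_le zero_le_one]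
    simpa using (h.comp_sub_left 1).symm
  · rw [intervalIntegral.integral_comp_sub_left f 1]
    simpa using hf.2.2

theorem fourierCoeff01_comp_one_sub (f : ℝ → ℝ) (n : ℤ) :
    fourierCoeff01 (fun y => f (1 - y)) n = starRingEnd ℂ (fourierCoeff01 f n) := by
  unfold fourierCoeff01
  rw [← intervalIntegral.intervalIntegral_conj]
  have h := intervalIntegral.integral_comp_sub_left (a := 0) (b := 1)
    (fun x : ℝ => starRingEnd ℂ ((f x : ℂ) *
      Complex.exp (-(2 * Real.pi * Complex.I) * n * x))) 1
  rw [sub_self, sub_zero] at h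
  rw [← h]
  refine intervalIntegral.integral_congr fun x _ => ?_
  simp only [map_mul, Complex.conj_ofReal, ← Complex.exp_conj]
  congr 1
  rw [Complex.exp_eq_exp_iff_exists_int]
  refine ⟨-n, ?_⟩
  have h2 : starRingEnd ℂ 2 = 2 := map_ofNat _ 2
  simp [h2]
  ring

theorem circleCoeff_one (n : ℤ) :
    circleCoeff (fun _ => 1) n = if n = 0 then 1 else 0 := by
  have h := circleCoeff_fourier 0 n
  simp only [circleCoeff, fourier_zero] at h ⊢
  rw [h]
  simp [eq_comm]

theorem norm_circleCoeff_sub_le {f g : UnitAddCircle → ℂ} (hf : Integrable f) (hg : Integrable g)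
    (n : ℤ) : ‖circleCoeff f n - circleCoeff g n‖ ≤ ∫ x, ‖f x - g x‖ := by
  rw [circleCoeff, circleCoeff,
    ← integral_sub (integrable_mul_fourier hf _) (integrable_mul_fourier hg _)]
  refine (norm_integral_le_integral_norm _).trans_eq ?_
  simp only [← sub_mul, norm_mul, norm_fourier_apply, mul_one]

/-- **Modulo 1 CLT with signs.** Let `η m ∈ {−1, +1}` be fixed signs and let `h M` be the
density of `η₁Y₁ + ⋯ + η_M Y_M` mod 1, where the `Y m` are independent with densities
`g m` (the density of `−Y` mod 1 being `y ↦ g (1 − y)`).  Then `h M → 1` in `L¹([0,1])`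
iff for every nonzero integer `n` the products `ĝ₁(n)⋯ĝ_M(n)` tend to `0`. -/
theorem modOneCLT_signs (g : ℕ → ℝ → ℝ) (hg : ∀ m, 1 ≤ m → IsProbDensity (g m))
    (η : ℕ → ℤ) (hη : ∀ m, η m = 1 ∨ η m = -1)
    (gg : ℕ → ℝ → ℝ)
    (hgg : ∀ m, gg m = if η m = 1 then g m else fun y => g m (1 - y))
    (h : ℕ → ℝ → ℝ) (h1 : h 1 = gg 1)
    (hrec : ∀ M, 1 ≤ M → h (M + 1) = circConv (h M) (gg (M + 1))) :
    Tendsto (fun M => ∫ x in (0:ℝ)..1, |h M x - 1|) atTop (nhds 0) ↔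
      ∀ n : ℤ, n ≠ 0 →
        Tendsto (fun M => ∏ m ∈ Finset.Icc 1 M, fourierCoeff01 (g m) n) atTop (nhds 0) := by
  have hdens : ∀ m, 1 ≤ m → IsProbDensity (gg m) := fun m hm => by
    rw [hgg]
    split_ifs
    exacts [hg m hm, (hg m hm).comp_one_sub]
  have hnorm : ∀ m n, ‖fourierCoeff01 (gg m) n‖ = ‖fourierCoeff01 (g m) n‖ := fun m n => by
    rw [hgg]
    split_ifs
    · rfl
    · rw [fourierCoeff01_comp_one_sub, RCLike.norm_conj]
  have hG : ∀ m, 1 ≤ m → Integrable (circleLift (gg m)) := fun m hm =>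
    integrable_circleLift (hdens m hm).2.1
  have hlift : ∀ M, 1 ≤ M →
      circleLift (h (M + 1)) = circleConv (circleLift (h M)) (circleLift (gg (M + 1))) :=
    fun M hM => by rw [hrec M hM, circleLift_circConv]
  have hi : ∀ M, 1 ≤ M → Integrable (circleLift (h M)) := fun M hM => by
    induction M, hM using Nat.le_induction with
    | base => exact h1 ▸ hG 1 le_rfl
    | succ M hM ih => exact hlift M hM ▸ integrable_circleConv ih (hG _ (by omega))
  have hcoeff : ∀ n M, 1 ≤ M → circleCoeff (circleLift (h M)) n =
      ∏ m ∈ Finset.Icc 1 M, fourierCoeff01 (gg m) n := fun n M hM => by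
    induction M, hM using Nat.le_induction with
    | base => simp [h1, circleCoeff_circleLift]
    | succ M hM ih =>
      rw [hlift M hM, circleCoeff_circleConv (hi M hM) (hG _ (by omega)), ih,
        circleCoeff_circleLift, Finset.prod_Icc_succ_top (by omega)]
  have hprod : ∀ n M, 1 ≤ M → ‖circleCoeff (circleLift (h M)) n‖ =
      ‖∏ m ∈ Finset.Icc 1 M, fourierCoeff01 (g m) n‖ := fun n M hM => by
    rw [hcoeff n M hM, norm_prod, norm_prod]
    exact Finset.prod_congr rfl fun m _ => hnorm m n
  have hK : Integrable (fun _ : UnitAddCircle => (1 : ℂ)) := integrable_const _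
  simp only [← integral_norm_circleLift_sub_one]
  constructor
  · intro hlim n hn
    rw [tendsto_zero_iff_norm_tendsto_zero]
    refine squeeze_zero' (.of_forall fun M => norm_nonneg _) ?_ hlim
    filter_upwards [eventually_ge_atTop 1] with M hM
    simpa [circleCoeff_one, hn, hprod n M hM] using norm_circleCoeff_sub_le (hi M hM) hK n
  · intro hlim
    refine tendsto_iterated_circleConv (G := fun m => circleLift (gg m)) (hi 1 le_rfl) hG
      (fun m hm => (hdens m hm).integral_norm_circleLift.le) hlift hK fun n => ?_
    rw [circleCoeff_one]
    split_ifs with hn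
    · refine tendsto_const_nhds.congr' ?_
      filter_upwards [eventually_ge_atTop 1] with M hM
      rw [hcoeff n M hM, hn, Finset.prod_eq_one fun m hm =>
        (hdens m (Finset.mem_Icc.1 hm).1).fourierCoeff01_zero]
    · rw [tendsto_zero_iff_norm_tendsto_zero]
      refine (hlim n hn).norm.congr' ?_ |>.trans (by simp)
      filter_upwards [eventually_ge_atTop 1] with M hM
      rw [hprod n M hM]

end
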